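/- Fix P ∈ ℙ^n. Assume there exist zero-dimensional closed subschemes A, B ⊂ ℙ^m with A ≠ B such that P ∈ ⟨ν_d(A)⟩ ∩ ⟨ν_d(B)⟩, P ∉ ⟨ν_d(A')⟩ for every A' ⊊ A, P ∉ ⟨ν_d(B')⟩ for every B' ⊊ B, and B is reduced. Assume there exist a positive integer t ≤ d and a degree-t hypersurface D ⊂ ℙ^m such that h^1(I_{Res_D(A∪B)}(d−t)) = 0. Set E := B ∖ (B ∩ D). Then ν_d(E) is linearly independent, E = Res_D(A), every unreduced connected component of A is contained in D, and the linear space ⟨ν_d(A)⟩ ∩ ⟨ν_d(B)⟩ is spanned by its two supplementary subspaces ⟨ν_d(E)⟩ and ⟨ν_d(A ∩ D)⟩ ∩ ⟨ν_d(B ∩ D)⟩. -/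

import Mathlib

open scoped LinearAlgebra.Projectivization

noncomputable section

/-- The polynomial ring in `m+1` variables over `K`: homogeneous coordinate ring of `ℙ^m`. -/
abbrev PR (K : Type) [Field K] (m : ℕ) : Type := MvPolynomial (Fin (m+1)) K

/-- The space of degree-`d` forms in `m+1` variables. -/
abbrev Hd (K : Type) [Field K] (m d : ℕ) : Submodule K (PR K m) :=
  MvPolynomial.homogeneousSubmodule (Fin (m+1)) K d

/-- Projective `m`-space over `K`. -/
abbrev Pm (K : Type) [Field K] (m : ℕ) := ℙ K (Fin (m+1) → K)

/-- The target projective space `ℙ^n`, `n = C(m+d,m) - 1`, of the degree-`d` Veronese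
embedding, realized as the projectivization of the dual of the space of degree-`d` forms
(the space of degree-`d` symmetric tensors). -/
abbrev PN (K : Type) [Field K] (m d : ℕ) := ℙ K (Module.Dual K (Hd K m d))

variable {K : Type} [Field K] {m : ℕ}

/-- Hilbert function of `R/I` in degree `t`. -/
def hilbQ (I : Ideal (PR K m)) (t : ℕ) : ℕ :=
  Module.finrank K ((Hd K m t).map (Ideal.Quotient.mkₐ K I).toLinearMap)

/-- The degree (length) of the projective scheme defined by `I`: the eventual value of the
Hilbert function of `R/I`. -/
def idealDeg (I : Ideal (PR K m)) : ℕ := Filter.limsup (fun t => hilbQ I t) Filter.atTop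

/-- `h^1(𝓘_Z(d))` for the zero-dimensional scheme `Z` with (saturated) ideal `I`:
it equals `deg Z - dim (R/I)_d`. -/
def h1I (I : Ideal (PR K m)) (d : ℕ) : ℕ := idealDeg I - hilbQ I d

/-- An ideal is homogeneous. -/
def IsHomogI (I : Ideal (PR K m)) : Prop :=
  ∀ f ∈ I, ∀ n : ℕ, MvPolynomial.homogeneousComponent n f ∈ I

/-- An ideal is saturated with respect to the irrelevant maximal ideal. -/
def IsSatI (I : Ideal (PR K m)) : Prop :=
  ∀ f : PR K m, (∀ i, MvPolynomial.X i * f ∈ I) → f ∈ I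

/-- A closed subscheme of `ℙ^m`, given by its saturated homogeneous ideal. -/
structure PSub (K : Type) [Field K] (m : ℕ) where
  I : Ideal (PR K m)
  homog : IsHomogI I
  sat : IsSatI I

/-- A (closed sub)scheme is zero-dimensional iff the Hilbert function of `R/I` is bounded. -/
def IsZeroDimI (I : Ideal (PR K m)) : Prop := ∃ C, ∀ t, hilbQ I t ≤ C

/-- A polynomial vanishes at a projective point (every homogeneous component vanishes
at a representative). -/
def vanishesAt (f : PR K m) (a : Pm K m) : Prop :=
  ∀ n : ℕ, MvPolynomial.eval a.rep (MvPolynomial.homogeneousComponent n f) = 0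

/-- Zero locus of an ideal in `ℙ^m`. -/
def pzeroLocus (I : Ideal (PR K m)) : Set (Pm K m) := {a | ∀ f ∈ I, vanishesAt f a}

/-- The (saturated) homogeneous ideal of a set of points of `ℙ^m`. -/
def idealOfSet (S : Set (Pm K m)) : Ideal (PR K m) :=
  Ideal.span {f : PR K m | (∃ n, f.IsHomogeneous n) ∧ ∀ a ∈ S, MvPolynomial.eval a.rep f = 0}

/-- Saturation of a homogeneous ideal: the smallest saturated homogeneous ideal containing it. -/
def satIdeal (J : Ideal (PR K m)) : Ideal (PR K m) := sInf {J' | J ≤ J' ∧ IsHomogI J' ∧ IsSatI J'}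

/-- The scheme defined by the (saturated) ideal `I` is reduced. -/
def IsReducedI (I : Ideal (PR K m)) : Prop := I = idealOfSet (pzeroLocus I)

/-- Connected component of a zero-dimensional scheme at a point `a`: the largest subscheme
supported at `a`, i.e. the `a`-primary component. -/
def componentAt (I : Ideal (PR K m)) (a : Pm K m) : Ideal (PR K m) :=
  sInf {J | I ≤ J ∧ IsHomogI J ∧ IsSatI J ∧ pzeroLocus J ⊆ {a}}

/-- Residual scheme of `Z` with respect to the hypersurface `f = 0`: the colon ideal `(I_Z : f)`. -/
def resIdeal (I : Ideal (PR K m)) (f : PR K m) : Ideal (PR K m) :=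
  Submodule.colon I (Ideal.span {f})

/-- Degree of the scheme-theoretic intersection of the subschemes defined by `I` and `J`. -/
def interDeg (I J : Ideal (PR K m)) : ℕ := idealDeg (I ⊔ J)

/-- The degree-`d` Veronese image of a vector `v`: the evaluation-at-`v` functional on
degree-`d` forms. -/
def nu (d : ℕ) (v : Fin (m+1) → K) : Module.Dual K (Hd K m d) :=
  (MvPolynomial.aeval v).toLinearMap ∘ₗ (Hd K m d).subtype

/-- The linear span of the Veronese image `ν_d(S)` of a set `S` of points of `ℙ^m`. -/
def dualSpan (d : ℕ) (S : Set (Pm K m)) : Submodule K (Module.Dual K (Hd K m d)) :=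
  Submodule.span K ((fun a => nu d a.rep) '' S)

/-- The linear span `⟨ν_d(Z)⟩` of the Veronese image of the subscheme with ideal `I`:
the annihilator of the degree-`d` part of `I`. -/
def schemeSpanSub (I : Ideal (PR K m)) (d : ℕ) : Submodule K (Module.Dual K (Hd K m d)) where
  carrier := {φ | ∀ f : Hd K m d, (f : PR K m) ∈ I → φ f = 0}
  add_mem' := by
    intro a b ha hb f hf
    simp [LinearMap.add_apply, ha f hf, hb f hf]
  zero_mem' := by intro f hf; simp
  smul_mem' := by
    intro c a ha f hf
    simp [LinearMap.smul_apply, ha f hf]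

/-- `P ∈ ⟨ν_d(Z)⟩`, for `Z` the subscheme with ideal `I`. -/
def inSpanI (I : Ideal (PR K m)) (d : ℕ) (P : PN K m d) : Prop := P.rep ∈ schemeSpanSub I d

/-- `P ∈ ⟨ν_d(S)⟩` for a set `S` of points of `ℙ^m`. -/
def inSpanSet (d : ℕ) (S : Set (Pm K m)) (P : PN K m d) : Prop := P.rep ∈ dualSpan d S

/-- `L` is a linear subspace of `ℙ^m`. -/
def IsLinearSub (L : Set (Pm K m)) : Prop :=
  ∃ W : Submodule K (Fin (m+1) → K), L = {a | a.submodule ≤ W}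

/-- `L` is a line of `ℙ^m`. -/
def IsLine (L : Set (Pm K m)) : Prop :=
  ∃ W : Submodule K (Fin (m+1) → K), Module.finrank K W = 2 ∧ L = {a | a.submodule ≤ W}

/-- `L` is a plane of `ℙ^m`. -/
def IsPlane (L : Set (Pm K m)) : Prop :=
  ∃ W : Submodule K (Fin (m+1) → K), Module.finrank K W = 3 ∧ L = {a | a.submodule ≤ W}

/-- `J` is the (saturated homogeneous) ideal of a conic of `ℙ^m`: a degree-2 curve contained
in a plane (possibly reducible). -/
def IsConic (J : Ideal (PR K m)) : Prop :=
  ∃ (W : Submodule K (Fin (m+1) → K)) (q : PR K m),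
    Module.finrank K W = 3 ∧ q.IsHomogeneous 2 ∧
    q ∉ idealOfSet {a : Pm K m | a.submodule ≤ W} ∧
    J = satIdeal (idealOfSet {a : Pm K m | a.submodule ≤ W} ⊔ Ideal.span {q})

/-- The algebra of polynomial functions on a `K`-vector space. -/
def polyFunctions (K V : Type) [Field K] [AddCommGroup V] [Module K V] : Subalgebra K (V → K) :=
  Algebra.adjoin K {g : V → K | ∃ φ : V →ₗ[K] K, g = ⇑φ}

/-- Zariski closure of a subset of a projective space. -/
def zClosure {V : Type} [AddCommGroup V] [Module K V] (T : Set (ℙ K V)) : Set (ℙ K V) :=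
  {P | ∀ F ∈ polyFunctions K V, (∀ Q ∈ T, ∀ c : K, F (c • Q.rep) = 0) →
    ∀ c : K, F (c • P.rep) = 0}

/-- The Veronese variety `X_{m,d} = ν_d(ℙ^m)` as a subset of `PN K m d`. -/
def XSet (K : Type) [Field K] (m d : ℕ) : Set (PN K m d) :=
  {Q | ∃ a : Pm K m, Q.submodule = Submodule.span K {nu d a.rep}}

/-- The image `ν_d(S)` of a set of points of `ℙ^m`, as a subset of `PN K m d`. -/
def nuSet (d : ℕ) (S : Set (Pm K m)) : Set (PN K m d) :=
  {Q | ∃ a ∈ S, Q.submodule = Submodule.span K {nu d a.rep}}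

/-- The rank of a point `P` of `PN` with respect to a subset `Y ⊆ PN`. -/
def rankWrt {m d : ℕ} (Y : Set (PN K m d)) (P : PN K m d) : ℕ :=
  sInf {r | ∃ S : Finset (PN K m d), ↑S ⊆ Y ∧ S.card = r ∧
    P.rep ∈ Submodule.span K (Projectivization.rep '' (S : Set (PN K m d)))}

/-- The `s`-th secant variety of `Y ⊆ PN`: the Zariski closure of the union of the spans
of `s` points of `Y`. -/
def secantWrt {m d : ℕ} (Y : Set (PN K m d)) (s : ℕ) : Set (PN K m d) :=
  zClosure {Q | ∃ S : Finset (PN K m d), ↑S ⊆ Y ∧ S.card ≤ s ∧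
    Q.rep ∈ Submodule.span K (Projectivization.rep '' (S : Set (PN K m d)))}

/-- The border rank of `P` with respect to `Y ⊆ PN`. -/
def brankWrt {m d : ℕ} (Y : Set (PN K m d)) (P : PN K m d) : ℕ :=
  sInf {s | 0 < s ∧ P ∈ secantWrt Y s}

/-- Symmetric rank. -/
def srank {m : ℕ} (d : ℕ) (P : PN K m d) : ℕ := rankWrt (XSet K m d) P

/-- Border rank. -/
def brank {m : ℕ} (d : ℕ) (P : PN K m d) : ℕ := brankWrt (XSet K m d) P

/-- Cactus rank: minimal degree of a zero-dimensional closed subscheme `E ⊂ ℙ^m` with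
`P ∈ ⟨ν_d(E)⟩`. -/
def crank {m : ℕ} (d : ℕ) (P : PN K m d) : ℕ :=
  sInf {c | ∃ Z : PSub K m, IsZeroDimI Z.I ∧ idealDeg Z.I = c ∧ inSpanI Z.I d P}

/-- `σ_{s,r}(X_{m,d})`. -/
def sigmaSet (K : Type) [Field K] (m d s r : ℕ) : Set (PN K m d) :=
  {P | brank d P = s ∧ srank d P = r}

/-- A property `Φ` holds for a general `k`-tuple of points of the linear subspace of `ℙ^m`
determined by `W`. -/
def GenerallyOn (W : Submodule K (Fin (m+1) → K)) (k : ℕ)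
    (Φ : (Fin k → Pm K m) → Prop) : Prop :=
  ∃ w : Fin 3 → W, Submodule.span K (Set.range fun j => (w j : Fin (m+1) → K)) = W ∧
    ∃ F : MvPolynomial (Fin k × Fin 3) K, F ≠ 0 ∧
      ∀ c : Fin k → Fin 3 → K,
        MvPolynomial.eval (fun p => c p.1 p.2) F ≠ 0 →
        ∀ e : Fin k → Pm K m,
          (∀ i, (e i).submodule = Submodule.span K {∑ j, c i j • (w j : Fin (m+1) → K)}) → Φ e

end
section helpers
open MvPolynomial
variable {K : Type} [Field K] {m : ℕ}

theorem hc_mul {s : ℕ} {p : PR K m} (hp : p.IsHomogeneous s) (q : PR K m) (n : ℕ) :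
    homogeneousComponent (s + n) (p * q) = p * homogeneousComponent n q := by
  let _ : GradedAlgebra (homogeneousSubmodule (Fin (m+1)) K) := gradedAlgebra
  have := DirectSum.coe_decompose_mul_add_of_left_mem (homogeneousSubmodule (Fin (m+1)) K)
    (a := p) (b := q) (i := s) (j := n) hp
  have e : ∀ (φ : PR K m) (i : ℕ), ((DirectSum.decompose (homogeneousSubmodule (Fin (m+1)) K) φ i :
      homogeneousSubmodule (Fin (m+1)) K i) : PR K m) = homogeneousComponent i φ :=
    fun φ i => decomposition.decompose'_apply φ i
  rwa [e, e] at this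

/-- Evaluation along the line through `v`, as a ring hom to univariate polynomials. -/
noncomputable def thh (v : Fin (m+1) → K) : PR K m →ₐ[K] Polynomial K :=
  aeval (fun i => Polynomial.C (v i) * Polynomial.X)

theorem thh_homog (v : Fin (m+1) → K) {s : ℕ} {p : PR K m} (hp : p.IsHomogeneous s) :
    thh v p = Polynomial.C (eval v p) * Polynomial.X ^ s := by
  have h1 : thh v p = ∑ d ∈ p.support, Polynomial.C (coeff d p * ∏ i, v i ^ d i) *
      Polynomial.X ^ s := by
    unfold thh
    rw [aeval_def, eval₂_eq']
    refine Finset.sum_congr rfl fun d hd => ?_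
    have hdeg : ∑ i, d i = s := by
      have := hp (mem_support_iff.1 hd)
      rw [← this, Finsupp.weight_apply, Finsupp.sum_fintype]
      · simp
      · simp
    simp only [mul_pow, Finset.prod_mul_distrib, Finset.prod_pow_eq_pow_sum, hdeg]
    simp [mul_assoc]
  rw [h1, ← Finset.sum_mul, eval_eq', map_sum]

theorem thh_coeff (v : Fin (m+1) → K) (p : PR K m) (n : ℕ) :
    (thh v p).coeff n = eval v (homogeneousComponent n p) := by
  conv_lhs => rw [← sum_homogeneousComponent p]
  rw [map_sum, Polynomial.finsetSum_coeff]
  simp only [thh_homog v (homogeneousComponent_isHomogeneous _ p), Polynomial.coeff_C_mul,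
    Polynomial.coeff_X_pow, mul_ite, mul_one, mul_zero]
  rw [Finset.sum_ite_eq]
  split_ifs with h
  · rfl
  · rw [homogeneousComponent_eq_zero, map_zero]
    simpa using h

theorem vanishesAt_iff (p : PR K m) (a : Pm K m) : vanishesAt p a ↔ thh a.rep p = 0 := by
  rw [Polynomial.ext_iff]
  simp only [thh_coeff, Polynomial.coeff_zero]
  rfl

theorem vanishesAt_homog {p : PR K m} {s : ℕ} (hp : p.IsHomogeneous s) (a : Pm K m) :
    vanishesAt p a ↔ eval a.rep p = 0 := by
  rw [vanishesAt_iff, thh_homog _ hp]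
  simp

theorem mem_idealOfSet {S : Set (Pm K m)} {p : PR K m} :
    p ∈ idealOfSet S ↔ ∀ a ∈ S, vanishesAt p a := by
  constructor
  · intro hp a ha
    rw [vanishesAt_iff]
    have : idealOfSet S ≤ RingHom.ker (thh a.rep) := by
      refine Ideal.span_le.2 ?_
      rintro g ⟨⟨n, hn⟩, hg⟩
      exact (vanishesAt_iff _ _).1 ((vanishesAt_homog hn a).2 (hg a ha))
    exact this hp
  · intro h
    rw [← sum_homogeneousComponent p]
    refine Ideal.sum_mem _ fun n _ => Ideal.subset_span
      ⟨⟨n, homogeneousComponent_isHomogeneous _ _⟩, fun a ha => h a ha n⟩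

theorem mem_idealOfSet_homog {S : Set (Pm K m)} {p : PR K m} {s : ℕ} (hp : p.IsHomogeneous s) :
    p ∈ idealOfSet S ↔ ∀ a ∈ S, eval a.rep p = 0 := by
  rw [mem_idealOfSet]
  exact forall₂_congr fun a _ => vanishesAt_homog hp a

theorem idealOfSet_homog (S : Set (Pm K m)) : IsHomogI (idealOfSet S) := by
  intro p hp n
  rw [mem_idealOfSet_homog (homogeneousComponent_isHomogeneous n p)]
  intro a ha
  exact mem_idealOfSet.1 hp a ha n

theorem rep_coord (a : Pm K m) : ∃ i, a.rep i ≠ 0 := by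
  by_contra! h
  exact a.rep_nonzero (funext h)

theorem thh_X_ne (a : Pm K m) : ∃ i, thh a.rep (X i) ≠ 0 := by
  obtain ⟨i, hi⟩ := rep_coord a
  exact ⟨i, by simp [thh, hi]⟩

theorem idealOfSet_sat (S : Set (Pm K m)) : IsSatI (idealOfSet S) := by
  intro p hp
  rw [mem_idealOfSet]
  intro a ha
  obtain ⟨i, hi⟩ := thh_X_ne a
  have := mem_idealOfSet.1 (hp i) a ha
  rw [vanishesAt_iff, map_mul] at this
  rw [vanishesAt_iff]
  exact (mul_eq_zero.1 this).resolve_left hi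

theorem idealOfSet_anti {S T : Set (Pm K m)} (h : S ⊆ T) : idealOfSet T ≤ idealOfSet S := by
  intro p hp
  rw [mem_idealOfSet] at *
  exact fun a ha => hp a (h ha)

theorem mem_resIdeal {I : Ideal (PR K m)} {f g : PR K m} : g ∈ resIdeal I f ↔ f * g ∈ I := by
  unfold resIdeal
  rw [mul_comm]
  exact Ideal.mem_colon_span_singleton

theorem le_resIdeal (I : Ideal (PR K m)) (f : PR K m) : I ≤ resIdeal I f := by
  intro g hg
  rw [mem_resIdeal]
  exact Ideal.mul_mem_left _ _ hg

theorem resIdeal_homog {I : Ideal (PR K m)} (hI : IsHomogI I) {f : PR K m} {t : ℕ}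
    (hf : f.IsHomogeneous t) : IsHomogI (resIdeal I f) := by
  intro g hg n
  rw [mem_resIdeal] at *
  rw [← hc_mul hf]
  exact hI _ hg _

theorem resIdeal_sat {I : Ideal (PR K m)} (hI : IsSatI I) (f : PR K m) :
    IsSatI (resIdeal I f) := by
  intro g hg
  simp only [mem_resIdeal] at *
  refine hI _ fun i => ?_
  have := hg i
  rwa [mul_left_comm] at this

theorem sat_pow {J : Ideal (PR K m)} (hJ : IsSatI J) (h : PR K m)
    (hX : ∀ i, ∃ k, X i ^ k * h ∈ J) : h ∈ J := by
  let M : Ideal (PR K m) := Ideal.span (Set.range X)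
  let C : Ideal (PR K m) := resIdeal J h
  have hM : M ≤ C.radical := by
    refine Ideal.span_le.2 ?_
    rintro _ ⟨i, rfl⟩
    obtain ⟨k, hk⟩ := hX i
    exact ⟨k, mem_resIdeal.2 (by rwa [mul_comm])⟩
  obtain ⟨n, hn⟩ := Ideal.exists_pow_le_of_le_radical_of_fg hM (IsNoetherian.noetherian M)
  have key : ∀ n, M ^ n ≤ C → C = ⊤ := by
    intro n
    induction n with
    | zero => intro h; simpa using h
    | succ n ih =>
      intro hn
      refine ih fun u hu => ?_
      refine resIdeal_sat hJ h u fun i => hn ?_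
      rw [pow_succ']
      exact Ideal.mul_mem_mul (Ideal.subset_span ⟨i, rfl⟩) hu
  have : (1 : PR K m) ∈ C := by rw [key n hn]; trivial
  simpa using mem_resIdeal.1 this

theorem hc_eq_self {p : PR K m} {s : ℕ} (hp : p.IsHomogeneous s) :
    homogeneousComponent s p = p := homogeneousComponent_eq_self hp

theorem eval_smul_homog {p : PR K m} {s : ℕ} (hp : p.IsHomogeneous s) (c : K)
    (v : Fin (m+1) → K) : eval (c • v) p = c ^ s * eval v p := by
  have h := congrArg (Polynomial.eval c) (thh_homog v hp)
  have h2 : Polynomial.eval c (thh v p) = eval (c • v) p := by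
    have : (Polynomial.aeval c).comp (thh v) = aeval (c • v) := by
      ext i
      simp [thh]
      ring
    have := DFunLike.congr_fun this p
    simpa [Polynomial.coe_aeval_eq_eval, coe_aeval_eq_eval] using this
  rw [← h2, h, Polynomial.eval_mul, Polynomial.eval_C, Polynomial.eval_pow, Polynomial.eval_X,
    mul_comm]

/-- Nullstellensatz consequence. -/
theorem nzd_of_locus [IsAlgClosed K] {J : Ideal (PR K m)} (hJh : IsHomogI J) (hJs : IsSatI J)
    {a : Pm K m} (hJ : pzeroLocus J ⊆ {a}) {g : PR K m} {s : ℕ} (hg : g.IsHomogeneous s)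
    (hga : eval a.rep g ≠ 0) {h : PR K m} (hh : g * h ∈ J) : h ∈ J := by
  refine sat_pow hJs h fun i => ?_
  have hz : (X i : PR K m) ∈ (J ⊔ Ideal.span {g}).radical := by
    rw [← MvPolynomial.vanishingIdeal_zeroLocus_eq_radical (k := K) (K := K)]
    rw [mem_vanishingIdeal_iff]
    intro v hv
    rw [mem_zeroLocus_iff] at hv
    by_cases hv0 : v = 0
    · simp [hv0]
    exfalso
    obtain ⟨c, hc⟩ := Projectivization.exists_smul_eq_mk_rep K v hv0
    have hmem : Projectivization.mk K v hv0 ∈ pzeroLocus J := by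
      intro p hp n
      rw [← hc]
      change eval ((c : K) • v) _ = 0
      rw [eval_smul_homog (homogeneousComponent_isHomogeneous n p)]
      have := hv _ (Ideal.mem_sup_left (hJh p hp n))
      rw [aeval_eq_eval] at this
      simp [this]
    have ha := hJ hmem
    simp only [Set.mem_singleton_iff] at ha
    apply hga
    rw [← ha, ← hc]
    change eval ((c : K) • v) _ = 0
    rw [eval_smul_homog hg]
    have := hv _ (Ideal.mem_sup_right (Ideal.mem_span_singleton_self g))
    rw [aeval_eq_eval] at this
    simp [this]
  obtain ⟨k, hk⟩ := hz
  obtain ⟨j, hj, y, hy, e⟩ := Submodule.mem_sup.1 hk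
  obtain ⟨z, rfl⟩ := Ideal.mem_span_singleton'.1 hy
  refine ⟨k, ?_⟩
  rw [← e, add_mul, mul_assoc]
  exact J.add_mem (J.mul_mem_right _ hj) (J.mul_mem_left _ hh)

theorem exists_sep {a b : Pm K m} (hab : a ≠ b) :
    ∃ l : PR K m, l.IsHomogeneous 1 ∧ eval a.rep l = 0 ∧ eval b.rep l ≠ 0 := by
  by_contra! h
  apply hab
  obtain ⟨i, hi⟩ := rep_coord a
  have h2 : ∀ j, a.rep i * b.rep j = a.rep j * b.rep i := by
    intro j
    have := h (C (a.rep i) * X j - C (a.rep j) * X i)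
      ((isHomogeneous_C_mul_X _ _).sub (isHomogeneous_C_mul_X _ _)) (by simp [mul_comm])
    simpa [sub_eq_zero] using this
  have h3 : b.rep = (b.rep i / a.rep i) • a.rep := by
    funext j
    have := h2 j
    simp only [Pi.smul_apply, smul_eq_mul]
    field_simp
    linear_combination this
  rw [← a.mk_rep, ← b.mk_rep]
  rw [Projectivization.mk_eq_mk_iff']
  refine ⟨a.rep i / b.rep i, ?_⟩
  have hb : b.rep i ≠ 0 := by
    intro h0
    apply b.rep_nonzero
    rw [h3, h0]; simp
  funext j
  have := h2 j
  simp only [Pi.smul_apply, smul_eq_mul]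
  field_simp
  linear_combination this

theorem exists_sep_finset [DecidableEq (Pm K m)] (S : Finset (Pm K m)) (b : Pm K m) (hb : b ∉ S) (e : ℕ) :
    ∃ q : PR K m, q.IsHomogeneous (e + S.card) ∧ (∀ a ∈ S, eval a.rep q = 0) ∧
      eval b.rep q ≠ 0 := by
  induction S using Finset.induction_on with
  | empty =>
    obtain ⟨i, hi⟩ := rep_coord b
    exact ⟨X i ^ e, by simpa using isHomogeneous_X_pow (R := K) i e, by simp, by simp [hi]⟩
  | insert a S ha ih =>
    obtain ⟨q, h1, h2, h3⟩ := ih (fun h => hb (Finset.mem_insert_of_mem h))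
    obtain ⟨l, l1, l2, l3⟩ := exists_sep (a := a) (b := b)
      (fun h => hb (by rw [h]; exact Finset.mem_insert_self _ _))
    refine ⟨q * l, ?_, ?_, ?_⟩
    · rw [Finset.card_insert_of_notMem ha, ← add_assoc]
      exact h1.mul l1
    · intro c hc
      rcases Finset.mem_insert.1 hc with rfl | hc
      · simp [l2]
      · simp [h2 c hc]
    · simp [h3, l3]

instance hdFinite (s : ℕ) : Module.Finite K (Hd K m s) :=
  Module.Finite.iff_fg.2 (homogeneousSubmodule_fg _ _ s)

theorem exists_nzd [Infinite K] {I : Ideal (PR K m)} (hI : IsSatI I) :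
    ∃ l : PR K m, l.IsHomogeneous 1 ∧ ∀ h, l * h ∈ I → h ∈ I := by
  classical
  let Q := PR K m ⧸ I
  have hfin : (associatedPrimes (PR K m) Q).Finite := associatedPrimes.finite _ _
  let L : (Fin (m+1) → K) →ₗ[K] PR K m :=
    ∑ i, ((LinearMap.toSpanSingleton K (PR K m) (X i)) ∘ₗ LinearMap.proj i)
  have hL : ∀ c, L c = ∑ i, c i • X i := by intro c; simp [L]
  let F : Ideal (PR K m) → Submodule K (Fin (m+1) → K) :=
    fun p => (p.restrictScalars K).comap L
  have hF : ∀ p c, c ∈ F p ↔ L c ∈ p := fun p c => Iff.rfl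
  have htop : ⊤ ∉ hfin.toFinset.image F := by
    intro hmem
    obtain ⟨p, hp, hpt⟩ := Finset.mem_image.1 hmem
    rw [Set.Finite.mem_toFinset, AssociatedPrimes.mem_iff, isAssociatedPrime_iff] at hp
    obtain ⟨hprime, x, hx⟩ := hp
    obtain ⟨y, rfl⟩ := Ideal.Quotient.mk_surjective x
    have hmem' : ∀ r : PR K m, r ∈ p ↔ r * y ∈ I := by
      intro r
      rw [hx, Submodule.mem_colon_singleton, Submodule.mem_bot, ← Ideal.Quotient.eq_zero_iff_mem,
        map_mul]
      rfl
    apply hprime.ne_top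
    rw [Ideal.eq_top_iff_one, hmem', one_mul]
    refine hI y fun i => ?_
    rw [← hmem']
    have : Pi.single i 1 ∈ F p := by rw [hpt]; trivial
    rw [hF, hL] at this
    simpa [Pi.single_apply] using this
  have hne := Subspace.biUnion_ne_univ_of_top_notMem htop
  obtain ⟨c, hc⟩ := (Set.ne_univ_iff_exists_notMem _).1 hne
  refine ⟨L c, ?_, ?_⟩
  · rw [hL]
    exact IsHomogeneous.sum _ _ _ fun i _ => by
      rw [smul_eq_C_mul]; exact isHomogeneous_C_mul_X _ _
  · intro h hh
    by_contra hne
    have hz : L c ∈ ⋃ p ∈ associatedPrimes (PR K m) Q, (p : Set (PR K m)) := by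
      rw [biUnion_associatedPrimes_eq_zero_divisors]
      refine ⟨Ideal.Quotient.mk I h, ?_, ?_⟩
      · rwa [Ne, Ideal.Quotient.eq_zero_iff_mem]
      · rw [← Ideal.Quotient.eq_zero_iff_mem, map_mul] at hh
        exact hh
    simp only [Set.mem_iUnion] at hz
    obtain ⟨p, hp, hpc⟩ := hz
    apply hc
    simp only [Set.mem_iUnion]
    exact ⟨F p, Finset.mem_image_of_mem _ (hfin.mem_toFinset.2 hp), hpc⟩

theorem finrank_map_inj' {V V' : Type} [AddCommGroup V] [Module K V] [AddCommGroup V'] [Module K V']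
    {g : V →ₗ[K] V'} (hg : Function.Injective g) (U : Submodule K V) :
    Module.finrank K (U.map g) = Module.finrank K U :=
  (LinearEquiv.finrank_eq (Submodule.equivMapOfInjective g hg U)).symm

theorem nzd_pow {I : Ideal (PR K m)} {l : PR K m} (hl : ∀ h, l * h ∈ I → h ∈ I) (k : ℕ) :
    ∀ h, l ^ k * h ∈ I → h ∈ I := by
  induction k with
  | zero => intro h hh; simpa using hh
  | succ k ih =>
    intro h hh
    rw [pow_succ', mul_assoc] at hh
    exact ih _ (hl _ hh)

theorem hilb_map_le {I : Ideal (PR K m)} {l : PR K m} {k : ℕ} (hlh : l.IsHomogeneous k) (s : ℕ) :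
    ((Hd K m s).map (Ideal.Quotient.mkₐ K I).toLinearMap).map
      (LinearMap.mulLeft K (Ideal.Quotient.mk I l)) ≤
      (Hd K m (s + k)).map (Ideal.Quotient.mkₐ K I).toLinearMap := by
  rintro _ ⟨_, ⟨u, hu, rfl⟩, rfl⟩
  refine ⟨l * u, ?_, ?_⟩
  · have h := hlh.mul (show u.IsHomogeneous s from hu)
    rw [add_comm k s] at h
    exact h
  · simp

theorem hilb_inj {I : Ideal (PR K m)} {l : PR K m} (hl : ∀ h, l * h ∈ I → h ∈ I) :
    Function.Injective (LinearMap.mulLeft K (Ideal.Quotient.mk I l)) := by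
  rw [injective_iff_map_eq_zero]
  intro x hx
  obtain ⟨y, rfl⟩ := Ideal.Quotient.mk_surjective x
  rw [LinearMap.mulLeft_apply, ← map_mul, Ideal.Quotient.eq_zero_iff_mem] at hx
  exact Ideal.Quotient.eq_zero_iff_mem.2 (hl _ hx)

theorem hilb_mono {I : Ideal (PR K m)} {l : PR K m} {k : ℕ} (hlh : l.IsHomogeneous k)
    (hl : ∀ h, l * h ∈ I → h ∈ I) (s : ℕ) : hilbQ I s ≤ hilbQ I (s + k) := by
  unfold hilbQ
  rw [← finrank_map_inj' (hilb_inj hl)]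
  exact Submodule.finrank_mono (hilb_map_le hlh s)

theorem hilb_surj {I : Ideal (PR K m)} {l : PR K m} {k : ℕ} (hlh : l.IsHomogeneous k)
    (hl : ∀ h, l * h ∈ I → h ∈ I) {s : ℕ} (hs : hilbQ I (s + k) ≤ hilbQ I s)
    {u : PR K m} (hu : u.IsHomogeneous (s + k)) :
    ∃ h : PR K m, h.IsHomogeneous s ∧ u - l * h ∈ I := by
  have heq := Submodule.eq_of_le_of_finrank_le (hilb_map_le (I := I) hlh s) (by
    rw [finrank_map_inj' (hilb_inj hl)]
    exact hs)
  have : Ideal.Quotient.mkₐ K I u ∈ (Hd K m (s + k)).map (Ideal.Quotient.mkₐ K I).toLinearMap :=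
    ⟨u, hu, rfl⟩
  rw [← heq] at this
  obtain ⟨_, ⟨h, hh, rfl⟩, e⟩ := this
  refine ⟨h, hh, ?_⟩
  rw [← Ideal.Quotient.eq_zero_iff_mem, map_sub, map_mul, sub_eq_zero]
  exact e.symm

theorem hilb_anti {I J : Ideal (PR K m)} (h : I ≤ J) (s : ℕ) : hilbQ J s ≤ hilbQ I s := by
  unfold hilbQ
  have : (Hd K m s).map (Ideal.Quotient.mkₐ K J).toLinearMap =
      ((Hd K m s).map (Ideal.Quotient.mkₐ K I).toLinearMap).map
        (Ideal.Quotient.factorₐ K h).toLinearMap := by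
    rw [← Submodule.map_comp]
    rfl
  rw [this]
  exact Submodule.finrank_map_le _ _

theorem hilb_inf {I J : Ideal (PR K m)} (s : ℕ) : hilbQ (I ⊓ J) s ≤ hilbQ I s + hilbQ J s := by
  unfold hilbQ
  let g : (PR K m ⧸ (I ⊓ J)) →ₗ[K] (PR K m ⧸ I) × (PR K m ⧸ J) :=
    (Ideal.Quotient.factorₐ K (inf_le_left : I ⊓ J ≤ I)).toLinearMap.prod
      (Ideal.Quotient.factorₐ K (inf_le_right : I ⊓ J ≤ J)).toLinearMap
  have hg : Function.Injective g := by
    rw [injective_iff_map_eq_zero]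
    intro x hx
    obtain ⟨y, rfl⟩ := Ideal.Quotient.mk_surjective x
    have h1 : Ideal.Quotient.mk I y = 0 := congrArg Prod.fst hx
    have h2 : Ideal.Quotient.mk J y = 0 := congrArg Prod.snd hx
    rw [Ideal.Quotient.eq_zero_iff_mem] at *
    exact ⟨h1, h2⟩
  rw [← finrank_map_inj' hg]
  let ρ := ((Hd K m s).map (Ideal.Quotient.mkₐ K I).toLinearMap).subtype.prodMap
    ((Hd K m s).map (Ideal.Quotient.mkₐ K J).toLinearMap).subtype
  refine (Submodule.finrank_mono (t := LinearMap.range ρ) ?_).trans ?_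
  · rintro _ ⟨_, ⟨u, hu, rfl⟩, rfl⟩
    exact ⟨(⟨_, u, hu, rfl⟩, ⟨_, u, hu, rfl⟩), rfl⟩
  · exact (LinearMap.finrank_range_le ρ).trans (Module.finrank_prod).le

theorem zeroDim_inf {I J : Ideal (PR K m)} (hI : IsZeroDimI I) (hJ : IsZeroDimI J) :
    IsZeroDimI (I ⊓ J) := by
  obtain ⟨a, ha⟩ := hI
  obtain ⟨b, hb⟩ := hJ
  exact ⟨a + b, fun t => (hilb_inf t).trans (add_le_add (ha t) (hb t))⟩

/-- A linear form avoiding the zero-dimensional scheme `W`. -/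
theorem exists_good [Infinite K] {W : Ideal (PR K m)} (hW : IsSatI W) (hW0 : IsZeroDimI W) :
    ∃ l : PR K m, l.IsHomogeneous 1 ∧
      (∀ J, W ≤ J → IsSatI J → ∀ h, l * h ∈ J → h ∈ J) ∧
      (∀ a ∈ pzeroLocus W, eval a.rep l ≠ 0) := by
  obtain ⟨l, hlh, hl⟩ := exists_nzd hW
  have hN : ∃ N, hilbQ W (N + 1) ≤ hilbQ W N := by
    by_contra! hcon
    obtain ⟨C, hC⟩ := hW0
    have : ∀ n, n ≤ hilbQ W n := by
      intro n
      induction n with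
      | zero => exact Nat.zero_le _
      | succ n ih => exact Nat.succ_le_of_lt (ih.trans_lt (hcon n))
    have := this (C + 1)
    have := hC (C + 1)
    omega
  obtain ⟨N, hN⟩ := hN
  have hX : ∀ i : Fin (m+1), ∃ h : PR K m, X i ^ (N + 1) - l * h ∈ W := by
    intro i
    obtain ⟨h, -, hh⟩ := hilb_surj hlh hl hN (isHomogeneous_X_pow (R := K) i (N + 1))
    exact ⟨h, hh⟩
  refine ⟨l, hlh, ?_, ?_⟩
  · intro J hWJ hJ h hh
    refine sat_pow hJ h fun i => ⟨N + 1, ?_⟩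
    obtain ⟨g, hg⟩ := hX i
    have e : X i ^ (N + 1) * h = (X i ^ (N + 1) - l * g) * h + g * (l * h) := by ring
    rw [e]
    exact J.add_mem (J.mul_mem_right _ (hWJ hg)) (J.mul_mem_left _ hh)
  · intro a ha h0
    obtain ⟨i, hi⟩ := thh_X_ne a
    obtain ⟨g, hg⟩ := hX i
    have h1 := (vanishesAt_iff _ _).1 (ha _ hg)
    have h2 := (vanishesAt_iff _ _).1 ((vanishesAt_homog hlh a).2 h0)
    rw [map_sub, map_mul, h2, zero_mul, sub_zero, map_pow] at h1
    exact pow_ne_zero _ hi h1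

theorem h1_surj {Z : Ideal (PR K m)} (hZ0 : IsZeroDimI Z) {l : PR K m} (hlh : l.IsHomogeneous 1)
    (hl : ∀ h, l * h ∈ Z → h ∈ Z) {e : ℕ} (he : h1I Z e = 0) (k : ℕ)
    {u : PR K m} (hu : u.IsHomogeneous (e + k)) :
    ∃ h : PR K m, h.IsHomogeneous e ∧ u - l ^ k * h ∈ Z := by
  have hmono : Monotone (hilbQ Z) := monotone_nat_of_le_succ fun n => hilb_mono hlh hl n
  refine hilb_surj (by simpa using hlh.pow k) (nzd_pow hl k) ?_ hu
  have h1 : idealDeg Z ≤ hilbQ Z e := by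
    unfold h1I at he; omega
  refine le_trans ?_ h1
  unfold idealDeg
  obtain ⟨C, hC⟩ := hZ0
  refine Filter.le_limsup_of_frequently_le ?_ ?_
  · exact (Filter.eventually_atTop.2 ⟨e + k, fun n hn => hmono hn⟩).frequently
  · exact ⟨C, Filter.eventually_map.2 (Filter.Eventually.of_forall hC)⟩

theorem hc_mul_lt {s : ℕ} {p : PR K m} (hp : p.IsHomogeneous s) (q : PR K m) (n : ℕ)
    (hn : ¬ s ≤ n) : homogeneousComponent n (p * q) = 0 := by
  let _ : GradedAlgebra (homogeneousSubmodule (Fin (m+1)) K) := gradedAlgebra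
  have := DirectSum.coe_decompose_mul_of_left_mem_of_not_le (homogeneousSubmodule (Fin (m+1)) K)
    (a := p) (b := q) (i := s) (n := n) hp hn
  have e : ∀ (φ : PR K m) (i : ℕ), ((DirectSum.decompose (homogeneousSubmodule (Fin (m+1)) K) φ i :
      homogeneousSubmodule (Fin (m+1)) K i) : PR K m) = homogeneousComponent i φ :=
    fun φ i => decomposition.decompose'_apply φ i
  rwa [e] at this

theorem le_satIdeal (J : Ideal (PR K m)) : J ≤ satIdeal J :=
  le_sInf fun _ h => h.1

theorem satIdeal_homog (J : Ideal (PR K m)) : IsHomogI (satIdeal J) := by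
  intro p hp n
  rw [satIdeal, Submodule.mem_sInf] at *
  exact fun J' hJ' => hJ'.2.1 p (hp J' hJ') n

theorem satIdeal_sat (J : Ideal (PR K m)) : IsSatI (satIdeal J) := by
  intro p hp
  simp only [satIdeal, Submodule.mem_sInf] at *
  exact fun J' hJ' => hJ'.2.2 p fun i => hp i J' hJ'

theorem mem_satIdeal_pow {J : Ideal (PR K m)} (hJ : IsHomogI J) {l : PR K m}
    (hl : l.IsHomogeneous 1) {g : PR K m} (hg : g ∈ satIdeal J) : ∃ k, l ^ k * g ∈ J := by
  let J' : Ideal (PR K m) :=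
    { carrier := {g | ∃ k, l ^ k * g ∈ J}
      add_mem' := by
        rintro a b ⟨i, hi⟩ ⟨j, hj⟩
        refine ⟨i + j, ?_⟩
        have e : l ^ (i + j) * (a + b) = l ^ j * (l ^ i * a) + l ^ i * (l ^ j * b) := by ring
        rw [e]
        exact J.add_mem (J.mul_mem_left _ hi) (J.mul_mem_left _ hj)
      zero_mem' := ⟨0, by simp⟩
      smul_mem' := by
        rintro c a ⟨i, hi⟩
        refine ⟨i, ?_⟩
        rw [smul_eq_mul, mul_left_comm]
        exact J.mul_mem_left _ hi }
  have hmem : ∀ p, p ∈ J' ↔ ∃ k, l ^ k * p ∈ J := fun p => Iff.rfl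
  have : satIdeal J ≤ J' := by
    refine sInf_le ⟨fun p hp => ⟨0, by simpa using hp⟩, ?_, ?_⟩
    · rintro p ⟨k, hk⟩ n
      refine ⟨k, ?_⟩
      have hlk : (l ^ k).IsHomogeneous k := by simpa using hl.pow k
      rw [← hc_mul hlk]
      exact hJ _ hk _
    · intro p hp
      have hlp : l * p ∈ J' := by
        have hl' : l ∈ Submodule.span K (Set.range (X : Fin (m+1) → PR K m)) := by
          rw [← homogeneousSubmodule_one_eq_span_X]
          exact hl
        refine Submodule.span_induction (p := fun x _ => x * p ∈ J') ?_ ?_ ?_ ?_ hl'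
        · rintro _ ⟨i, rfl⟩
          exact hp i
        · simp
        · intro x y _ _ hx hy
          rw [add_mul]
          exact J'.add_mem hx hy
        · intro c x _ hx
          rw [smul_eq_C_mul, mul_assoc]
          exact J'.mul_mem_left _ hx
      obtain ⟨k, hk⟩ := hlp
      exact ⟨k + 1, by rwa [pow_succ, mul_assoc]⟩
  exact this hg

theorem homog_sup_mul {A U : Ideal (PR K m)} (hA : IsHomogI A) (hU : IsHomogI U)
    {f : PR K m} {t : ℕ} (hf : f.IsHomogeneous t) : IsHomogI (A ⊔ Ideal.span {f} * U) := by
  intro p hp n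
  obtain ⟨a, ha, y, hy, rfl⟩ := Submodule.mem_sup.1 hp
  obtain ⟨u, hu, rfl⟩ := Ideal.mem_span_singleton_mul.1 hy
  rw [map_add]
  refine Ideal.add_mem _ (Ideal.mem_sup_left (hA a ha n)) ?_
  by_cases hn : t ≤ n
  · obtain ⟨k, rfl⟩ := Nat.exists_eq_add_of_le hn
    rw [hc_mul hf]
    exact Ideal.mem_sup_right (Ideal.mem_span_singleton_mul.2 ⟨_, hU u hu k, rfl⟩)
  · rw [hc_mul_lt hf _ _ hn]
    exact Ideal.zero_mem _

theorem lemmaM {A U Z : Ideal (PR K m)} (hA : IsHomogI A) (hU : IsHomogI U)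
    {f l : PR K m} {t e : ℕ} (hf : f.IsHomogeneous t) (hl : l.IsHomogeneous 1)
    (hAl : ∀ h, l * h ∈ A → h ∈ A) (hUl : ∀ h, l * h ∈ U → h ∈ U)
    (hZU : Z ≤ U) (hZA : ∀ z ∈ Z, f * z ∈ A)
    (hs : ∀ (k : ℕ) (u : PR K m), u.IsHomogeneous (e + k) →
      ∃ h : PR K m, h.IsHomogeneous e ∧ u - l ^ k * h ∈ Z)
    {g : PR K m} (hg : g.IsHomogeneous (t + e)) (hgm : g ∈ satIdeal (A ⊔ Ideal.span {f} * U)) :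
    ∃ h ∈ U, h.IsHomogeneous e ∧ g - f * h ∈ A := by
  obtain ⟨k, hk⟩ := mem_satIdeal_pow (homog_sup_mul hA hU hf) hl hgm
  obtain ⟨a, ha, y, hy, e1⟩ := Submodule.mem_sup.1 hk
  obtain ⟨u, hu, rfl⟩ := Ideal.mem_span_singleton_mul.1 hy
  have hlk : (l ^ k).IsHomogeneous k := by simpa using hl.pow k
  have hd : (l ^ k * g).IsHomogeneous (t + (e + k)) := by
    have := hlk.mul hg
    rwa [show k + (t + e) = t + (e + k) by ring] at this
  have e2 := congrArg (homogeneousComponent (t + (e + k))) e1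
  rw [hc_eq_self hd, map_add, hc_mul hf] at e2
  have ha' := hA a ha (t + (e + k))
  have hu' := hU u hu (e + k)
  have huh := homogeneousComponent_isHomogeneous (e + k) u
  generalize homogeneousComponent (t + (e + k)) a = a' at *
  generalize homogeneousComponent (e + k) u = u' at *
  obtain ⟨h, hh, hz⟩ := hs k u' huh
  refine ⟨h, nzd_pow hUl k h ?_, hh, nzd_pow hAl k _ ?_⟩
  · have := U.sub_mem hu' (hZU hz)
    simpa using this
  · have := A.add_mem ha' (hZA _ hz)
    have e3 : l ^ k * (g - f * h) = a' + f * (u' - l ^ k * h) := by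
      rw [mul_sub, ← e2]; ring
    rwa [e3]

theorem nu_apply {s : ℕ} (v : Fin (m+1) → K) (p : Hd K m s) : nu s v p = eval v (p : PR K m) := by
  simp [nu, aeval_eq_eval]

theorem li_of_sep {s : ℕ} {E : Set (Pm K m)}
    (h : ∀ S : Finset (Pm K m), ↑S ⊆ E → ∀ b ∈ S, ∃ p : PR K m, p.IsHomogeneous s ∧
      eval b.rep p ≠ 0 ∧ ∀ a ∈ S, a ≠ b → eval a.rep p = 0) :
    LinearIndependent K (fun a : E => nu s (a : Pm K m).rep) := by
  classical
  rw [linearIndependent_iff']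
  intro S c hc i hi
  obtain ⟨p, hp, h1, h2⟩ := h (S.map (Function.Embedding.subtype _))
    (by intro x hx; simp only [Finset.coe_map, Set.mem_image] at hx; obtain ⟨y, _, rfl⟩ := hx; exact y.2)
    i (Finset.mem_map_of_mem (Function.Embedding.subtype _) hi)
  have := DFunLike.congr_fun hc ⟨p, hp⟩
  rw [LinearMap.sum_apply, Finset.sum_eq_single i] at this
  · rw [LinearMap.smul_apply, nu_apply] at this
    simpa [h1] using this
  · intro j hj hji
    have h3 : eval (j : Pm K m).rep p = 0 :=
      h2 _ (Finset.mem_map_of_mem (Function.Embedding.subtype _) hj) (fun e => hji (Subtype.ext e))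
    rw [LinearMap.smul_apply, nu_apply]
    simp [h3]
  · intro hn; exact absurd hi hn

/-- Multiplication by a form. -/
noncomputable def mulf {f : PR K m} {t : ℕ} (hf : f.IsHomogeneous t) (e : ℕ) :
    Hd K m e →ₗ[K] Hd K m (t + e) :=
  (LinearMap.mulLeft K f).restrict (fun _ hp => hf.mul hp)

theorem mulf_coe {f : PR K m} {t : ℕ} (hf : f.IsHomogeneous t) (e : ℕ) (p : Hd K m e) :
    ((mulf hf e p : Hd K m (t + e)) : PR K m) = f * (p : PR K m) := rfl

theorem mem_locus_span {f : PR K m} {t : ℕ} (hf : f.IsHomogeneous t) (a : Pm K m) :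
    a ∈ pzeroLocus (Ideal.span {f}) ↔ eval a.rep f = 0 := by
  constructor
  · intro h
    exact (vanishesAt_homog hf a).1 (h f (Ideal.mem_span_singleton_self f))
  · intro h p hp
    obtain ⟨q, rfl⟩ := Ideal.mem_span_singleton'.1 hp
    rw [vanishesAt_iff, map_mul, (vanishesAt_iff _ _).1 ((vanishesAt_homog hf a).2 h), mul_zero]

theorem nu_mem_schemeSpan {I : Ideal (PR K m)} {S : Set (Pm K m)} (h : I ≤ idealOfSet S) {d : ℕ}
    {a : Pm K m} (ha : a ∈ S) : nu d a.rep ∈ schemeSpanSub I d := by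
  intro p hp
  rw [nu_apply]
  exact (vanishesAt_homog p.2 a).1 (mem_idealOfSet.1 (h hp) a ha)

end helpers

/-- Lemma 5 (`v4`): with `A ≠ B` zero-dimensional, `B` reduced, `P` in both spans and in no
span of a proper subscheme, `D` a degree-`t` hypersurface (`0 < t ≤ d`) with
`h^1(𝓘_{Res_D(A∪B)}(d-t)) = 0`, and `E := B ∖ (B ∩ D)`: `ν_d(E)` is linearly independent,
`E = Res_D(A)`, every unreduced connected component of `A` lies in `D`, and
`⟨ν_d(A)⟩ ∩ ⟨ν_d(B)⟩` is spanned by its supplementary subspaces `⟨ν_d(E)⟩` and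
`⟨ν_d(A ∩ D)⟩ ∩ ⟨ν_d(B ∩ D)⟩`. -/
theorem stmt6 (K : Type) [Field K] [IsAlgClosed K] [CharZero K]
    (m d t : ℕ) (P : PN K m d)
    (A B : PSub K m) (hA0 : IsZeroDimI A.I) (hB0 : IsZeroDimI B.I) (hAB : A.I ≠ B.I)
    (hPA : inSpanI A.I d P) (hPB : inSpanI B.I d P)
    (hA : ∀ A' : PSub K m, A.I < A'.I → ¬ inSpanI A'.I d P)
    (hB : ∀ B' : PSub K m, B.I < B'.I → ¬ inSpanI B'.I d P)
    (hBred : IsReducedI B.I)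
    (ht : 0 < t) (htd : t ≤ d) (f : PR K m) (hf : f.IsHomogeneous t) (hf0 : f ≠ 0)
    (hres : h1I (resIdeal (A.I ⊓ B.I) f) (d - t) = 0) :
    (LinearIndependent K
      (fun a : (pzeroLocus B.I \ pzeroLocus (Ideal.span {f}) : Set (Pm K m)) =>
        nu d (a : Pm K m).rep)) ∧
    idealOfSet (pzeroLocus B.I \ pzeroLocus (Ideal.span {f})) = resIdeal A.I f ∧
    (∀ a ∈ pzeroLocus A.I, componentAt A.I a ≠ idealOfSet {a} →
      Ideal.span {f} ≤ componentAt A.I a) ∧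
    (dualSpan d (pzeroLocus B.I \ pzeroLocus (Ideal.span {f})) ⊓
        (schemeSpanSub (satIdeal (A.I ⊔ Ideal.span {f})) d ⊓
          schemeSpanSub (satIdeal (B.I ⊔ Ideal.span {f})) d) = ⊥) ∧
    (schemeSpanSub A.I d ⊓ schemeSpanSub B.I d =
      dualSpan d (pzeroLocus B.I \ pzeroLocus (Ideal.span {f})) ⊔
        (schemeSpanSub (satIdeal (A.I ⊔ Ideal.span {f})) d ⊓
          schemeSpanSub (satIdeal (B.I ⊔ Ideal.span {f})) d)) := by
  classical
  obtain ⟨e, rfl⟩ := Nat.exists_eq_add_of_le htd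
  rw [Nat.add_sub_cancel_left] at hres
  -- the union and its residual
  obtain ⟨W, hW⟩ : ∃ W, W = A.I ⊓ B.I := ⟨_, rfl⟩
  rw [← hW] at hres
  have hWA : W ≤ A.I := hW ▸ inf_le_left
  have hWB : W ≤ B.I := hW ▸ inf_le_right
  have hWs : IsSatI W := by
    rw [hW]
    exact fun p hp => ⟨A.sat p fun i => (hp i).1, B.sat p fun i => (hp i).2⟩
  have hW0 : IsZeroDimI W := hW ▸ zeroDim_inf hA0 hB0
  obtain ⟨l, hlh, hlJ, hlne⟩ := exists_good hWs hW0
  obtain ⟨Z, hZ⟩ : ∃ Z, Z = resIdeal W f := ⟨_, rfl⟩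
  rw [← hZ] at hres
  have hWZ : W ≤ Z := hZ ▸ le_resIdeal W f
  have hZ0 : IsZeroDimI Z := by
    obtain ⟨C, hC⟩ := hW0
    exact ⟨C, fun s => (hilb_anti hWZ s).trans (hC s)⟩
  have hZs : IsSatI Z := hZ ▸ resIdeal_sat hWs f
  have hsurj : ∀ (k : ℕ) (u : PR K m), u.IsHomogeneous (e + k) →
      ∃ h : PR K m, h.IsHomogeneous e ∧ u - l ^ k * h ∈ Z :=
    fun k u hu => h1_surj hZ0 hlh (hlJ Z hWZ hZs) hres k hu
  have hZA : Z ≤ resIdeal A.I f := fun z hz => by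
    rw [hZ, mem_resIdeal] at hz
    exact mem_resIdeal.2 (hWA hz)
  have hZB : Z ≤ resIdeal B.I f := fun z hz => by
    rw [hZ, mem_resIdeal] at hz
    exact mem_resIdeal.2 (hWB hz)
  -- the set E
  obtain ⟨E, hE⟩ : ∃ E, E = pzeroLocus B.I \ pzeroLocus (Ideal.span {f}) := ⟨_, rfl⟩
  rw [← hE]
  have hEf : ∀ a ∈ E, MvPolynomial.eval a.rep f ≠ 0 := by
    intro a ha h0
    rw [hE] at ha
    exact ha.2 ((mem_locus_span hf a).2 h0)
  have hEB : ∀ a ∈ E, a ∈ pzeroLocus B.I := fun a ha => by rw [hE] at ha; exact ha.1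
  have hnE : ∀ a ∈ pzeroLocus B.I, a ∉ E → MvPolynomial.eval a.rep f = 0 := by
    intro a ha hn
    by_contra h0
    exact hn (hE ▸ ⟨ha, fun h => h0 ((mem_locus_span hf a).1 h)⟩)
  have hlE : ∀ a ∈ E, MvPolynomial.eval a.rep l ≠ 0 := fun a ha =>
    hlne a fun p hp => hEB a ha p (hWB hp)
  have hresB : resIdeal B.I f = idealOfSet E := by
    ext g
    rw [mem_resIdeal, hBred, mem_idealOfSet, mem_idealOfSet]
    constructor
    · intro h a ha
      have h1 := (vanishesAt_iff _ _).1 (h a (hEB a ha))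
      rw [map_mul] at h1
      refine (vanishesAt_iff _ _).2 ((mul_eq_zero.1 h1).resolve_left fun h2 => hEf a ha ?_)
      exact (vanishesAt_homog hf a).1 ((vanishesAt_iff _ _).2 h2)
    · intro h a ha
      rw [vanishesAt_iff, map_mul]
      by_cases haE : a ∈ E
      · rw [(vanishesAt_iff _ _).1 (h a haE), mul_zero]
      · rw [(vanishesAt_iff _ _).1 ((vanishesAt_homog hf a).2 (hnE a ha haE)), zero_mul]
  have hZE : Z ≤ idealOfSet E := hresB ▸ hZB
  have hWE : W ≤ idealOfSet E := hWZ.trans hZE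
  have hBE : B.I ≤ idealOfSet E := hresB ▸ le_resIdeal _ _
  have hlIE : ∀ h, l * h ∈ idealOfSet E → h ∈ idealOfSet E := hlJ _ hWE (idealOfSet_sat E)
  have hlkh : ∀ k, (l ^ k).IsHomogeneous k := fun k => by simpa using hlh.pow k
  -- separation in degree e
  have hsep : ∀ S : Finset (Pm K m), ↑S ⊆ E → ∀ b ∈ S, ∃ p : PR K m, p.IsHomogeneous e ∧
      MvPolynomial.eval b.rep p ≠ 0 ∧ ∀ a ∈ S, a ≠ b → MvPolynomial.eval a.rep p = 0 := by
    intro S hS b hb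
    obtain ⟨q, hq, hq1, hq2⟩ := exists_sep_finset (S.erase b) b (Finset.notMem_erase b S) e
    obtain ⟨h, hh, hz⟩ := hsurj _ q hq
    have hev : ∀ a ∈ E, MvPolynomial.eval a.rep q = MvPolynomial.eval a.rep l ^ (S.erase b).card * MvPolynomial.eval a.rep h := by
      intro a ha
      have h1 : (l ^ (S.erase b).card * h).IsHomogeneous (e + (S.erase b).card) := by
        rw [add_comm e]
        exact (hlkh _).mul hh
      have := (mem_idealOfSet_homog (hq.sub h1)).1 (hZE hz) a ha
      simpa [sub_eq_zero] using this
    refine ⟨h, hh, ?_, ?_⟩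
    · intro h0
      apply hq2
      rw [hev b (hS hb), h0, mul_zero]
    · intro a ha hab
      have h1 := hq1 a (Finset.mem_erase.2 ⟨hab, ha⟩)
      rw [hev a (hS ha)] at h1
      exact (mul_eq_zero.1 h1).resolve_left (pow_ne_zero _ (hlE a (hS ha)))
  have hfin : E.Finite := by
    have h1 := li_of_sep hsep
    have := h1.finite
    exact Set.toFinite E
  have hH : ∀ b : E, ∃ p : PR K m, p.IsHomogeneous e ∧
      MvPolynomial.eval (b : Pm K m).rep p = 1 ∧ ∀ a ∈ E, a ≠ b → MvPolynomial.eval a.rep p = 0 := by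
    intro b
    obtain ⟨p, hp, h1, h2⟩ := hsep hfin.toFinset (by simp) b (by simp)
    refine ⟨MvPolynomial.C (MvPolynomial.eval (b : Pm K m).rep p)⁻¹ * p, hp.C_mul _, by simp [h1], ?_⟩
    intro a ha hab
    simp [h2 a (by simpa using ha) hab]
  choose H Hh H1 H0 using hH
  -- Step 1
  have hA_le : resIdeal A.I f ≤ idealOfSet E := by
    intro g hg
    rw [mem_idealOfSet]
    intro b hb n
    by_contra hne
    have hu := resIdeal_homog A.homog hf g hg n
    have huh := MvPolynomial.homogeneousComponent_isHomogeneous n g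
    generalize MvPolynomial.homogeneousComponent n g = u at *
    obtain ⟨h, hh⟩ : ∃ h, h = H ⟨b, hb⟩ := ⟨_, rfl⟩
    have hhh : h.IsHomogeneous e := hh ▸ Hh _
    have hh1 : MvPolynomial.eval b.rep h = 1 := by rw [hh]; exact H1 ⟨b, hb⟩
    have hh0 : ∀ a ∈ E, a ≠ b → MvPolynomial.eval a.rep h = 0 := by rw [hh]; exact H0 ⟨b, hb⟩
    obtain ⟨c, hc⟩ : ∃ c, c = MvPolynomial.eval b.rep l ^ n / MvPolynomial.eval b.rep u := ⟨_, rfl⟩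
    have hx1 : (MvPolynomial.C c * (u * h)).IsHomogeneous (e + n) := by
      rw [add_comm e n]
      exact (huh.mul hhh).C_mul c
    have hx2 : (l ^ n * h).IsHomogeneous (e + n) := by
      rw [add_comm e n]
      exact (hlkh n).mul hhh
    have hx3 : l ^ n * h - MvPolynomial.C c * (u * h) ∈ idealOfSet E := by
      rw [mem_idealOfSet_homog (hx2.sub hx1)]
      intro a ha
      by_cases hab : a = b
      · subst hab
        simp only [map_sub, map_mul, map_pow, MvPolynomial.eval_C, hh1, hc]
        field_simp
        simp
      · simp [hh0 a ha hab]
    have hx4 : MvPolynomial.C c * (u * h) ∈ resIdeal A.I f :=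
      Ideal.mul_mem_left _ _ (Ideal.mul_mem_right _ _ hu)
    obtain ⟨a', ha'h, hz⟩ := hsurj n _ hx1
    have ha' : a' ∈ resIdeal A.I f := by
      refine nzd_pow (hlJ _ (hWZ.trans hZA) (resIdeal_sat A.sat f)) n _ ?_
      have := Ideal.sub_mem _ hx4 (hZA hz)
      simpa using this
    have hd' : h - a' ∈ idealOfSet E := by
      refine nzd_pow hlIE n _ ?_
      have := Ideal.add_mem _ hx3 (hZE hz)
      have e1 : l ^ n * (h - a') = l ^ n * h - MvPolynomial.C c * (u * h) + (MvPolynomial.C c * (u * h) - l ^ n * a') := by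
        ring
      rwa [e1]
    rw [← hresB, mem_resIdeal] at hd'
    rw [mem_resIdeal] at ha'
    have hφ : P.rep (mulf hf e ⟨h, hhh⟩) = 0 := by
      have e1 : (⟨h, hhh⟩ : Hd K m e) = ⟨a', ha'h⟩ + ⟨h - a', hhh.sub ha'h⟩ := by
        ext1; simp
      rw [e1, map_add, map_add, hPA _ (by rw [mulf_coe]; exact ha'),
        hPB _ (by rw [mulf_coe]; exact hd'), add_zero]
    let B' : PSub K m := ⟨idealOfSet (pzeroLocus B.I \ {b}), idealOfSet_homog _, idealOfSet_sat _⟩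
    have hfh : (f * h).IsHomogeneous (t + e) := hf.mul hhh
    refine hB B' (lt_of_le_of_ne ?_ ?_) ?_
    · conv_lhs => rw [hBred]
      exact idealOfSet_anti Set.sdiff_subset
    · intro heq
      have h1 : f * h ∈ B'.I := by
        refine (mem_idealOfSet_homog hfh).2 ?_
        rintro a ⟨ha, hab⟩
        by_cases haE : a ∈ E
        · simp [hh0 a haE hab]
        · simp [hnE a ha haE]
      rw [← heq] at h1
      have h2 := (vanishesAt_homog hfh b).1 (hEB b hb _ h1)
      rw [map_mul, hh1, mul_one] at h2
      exact hEf b hb h2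
    · rintro ⟨g', hg'⟩ hgm
      have hgm' := (mem_idealOfSet_homog hg').1 hgm
      obtain ⟨c', hc'⟩ : ∃ c', c' = MvPolynomial.eval b.rep g' / MvPolynomial.eval b.rep f := ⟨_, rfl⟩
      have h1 : g' - MvPolynomial.C c' * (f * h) ∈ B.I := by
        rw [hBred]
        refine (mem_idealOfSet_homog (hg'.sub (hfh.C_mul c'))).2 ?_
        intro a ha
        by_cases hab : a = b
        · subst hab
          have := hEf a hb
          simp only [map_sub, map_mul, MvPolynomial.eval_C, hh1, hc']
          field_simp
          simp
        · rw [map_sub, hgm' a ⟨ha, hab⟩]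
          by_cases haE : a ∈ E
          · simp [hh0 a haE hab]
          · simp [hnE a ha haE]
      have e1 : (⟨g', hg'⟩ : Hd K m (t + e)) =
          ⟨g' - MvPolynomial.C c' * (f * h), hg'.sub (hfh.C_mul c')⟩ + c' • mulf hf e ⟨h, hhh⟩ := by
        ext1
        simp [mulf_coe, MvPolynomial.smul_eq_C_mul]
      rw [e1, map_add, map_smul, hφ, smul_zero, add_zero]
      exact hPB _ h1
  have hAE : A.I ≤ idealOfSet E := (le_resIdeal _ _).trans hA_le
  -- Step 2
  have hfA : ∀ u ∈ idealOfSet E, f * u ∈ A.I := by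
    let A' : PSub K m := ⟨satIdeal (A.I ⊔ Ideal.span {f} * idealOfSet E), satIdeal_homog _,
      satIdeal_sat _⟩
    have hle : A.I ≤ A'.I := le_sup_left.trans (le_satIdeal _)
    have hin : inSpanI A'.I (t + e) P := by
      rintro ⟨g, hg⟩ hgm
      obtain ⟨h, hhE, hh, hgA⟩ := lemmaM A.homog (idealOfSet_homog E) hf hlh
        (hlJ _ hWA A.sat) hlIE hZE (fun z hz => mem_resIdeal.1 (hZA hz)) hsurj hg hgm
      rw [← hresB, mem_resIdeal] at hhE
      have e1 : (⟨g, hg⟩ : Hd K m (t + e)) = ⟨g - f * h, hg.sub (hf.mul hh)⟩ +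
          ⟨f * h, hf.mul hh⟩ := by
        ext1; simp
      rw [e1, map_add, hPA _ hgA, hPB _ hhE, add_zero]
    have heq : A.I = A'.I := by
      by_contra hne
      exact hA A' (lt_of_le_of_ne hle hne) hin
    intro u hu
    rw [heq]
    exact le_satIdeal _ (Ideal.mem_sup_right (Ideal.mem_span_singleton_mul.2 ⟨u, hu, rfl⟩))
  have hresA : idealOfSet E = resIdeal A.I f :=
    le_antisymm (fun u hu => mem_resIdeal.2 (hfA u hu)) hA_le
  have := hfin.fintype
  refine ⟨?_, hresA, ?_, ?_, ?_⟩
  · refine li_of_sep fun S hS b hb => ⟨f * H ⟨b, hS hb⟩, hf.mul (Hh _), ?_, ?_⟩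
    · have h1 := H1 ⟨b, hS hb⟩
      simp only at h1
      rw [map_mul, h1, mul_one]
      exact hEf b (hS hb)
    · intro a ha hab
      rw [map_mul, H0 ⟨b, hS hb⟩ a (hS ha) hab, mul_zero]
  · intro a ha hne
    rw [Ideal.span_singleton_le_iff_mem]
    by_cases haE : a ∈ E
    · exfalso
      apply hne
      apply le_antisymm
      · refine sInf_le ⟨?_, idealOfSet_homog _, idealOfSet_sat _, ?_⟩
        · intro p hp
          rw [mem_idealOfSet]
          rintro b rfl
          exact ha p hp
        · intro b hb
          by_contra hab
          obtain ⟨q, hq, hq1, hq2⟩ := exists_sep (a := a) (b := b) (fun h => hab h.symm)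
          refine hq2 ((vanishesAt_homog hq b).1 (hb q ((mem_idealOfSet_homog hq).2 ?_)))
          rintro _ rfl
          exact hq1
      · refine le_sInf ?_
        rintro J ⟨hAJ, hJh, hJs, hJz⟩ p hp
        refine nzd_of_locus hJh hJs hJz (Hh ⟨a, haE⟩) (by rw [H1 ⟨a, haE⟩]; exact one_ne_zero) ?_
        refine nzd_of_locus hJh hJs hJz hf (hEf a haE) (hAJ (hfA _ ?_))
        rw [mem_idealOfSet] at hp ⊢
        intro b hb
        rw [vanishesAt_iff, map_mul]
        by_cases hab : b = a
        · rw [(vanishesAt_iff _ _).1 (hp b hab), mul_zero]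
        · rw [(vanishesAt_iff _ _).1 ((vanishesAt_homog (Hh _) b).2 (H0 ⟨a, haE⟩ b hb hab)),
            zero_mul]
    · rw [componentAt, Submodule.mem_sInf]
      rintro J ⟨hAJ, hJh, hJs, hJz⟩
      obtain ⟨q, hq, hq1, hq2⟩ := exists_sep_finset hfin.toFinset a (by simpa using haE) 0
      refine nzd_of_locus hJh hJs hJz hq hq2 ?_
      rw [mul_comm]
      exact hAJ (hfA q ((mem_idealOfSet_homog hq).2 fun b hb => hq1 b (by simpa using hb)))
  · rw [eq_bot_iff]
    rintro x ⟨hx, hxA, -⟩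
    have hx' : x ∈ Submodule.span K (Set.range fun a : E => nu (t + e) (a : Pm K m).rep) := by
      rw [dualSpan, Set.image_eq_range] at hx
      exact hx
    obtain ⟨c, rfl⟩ := (Submodule.mem_span_range_iff_exists_fun K).1 hx'
    have hc : ∀ b, c b = 0 := by
      intro b
      have h1 := hxA (mulf hf e ⟨H b, Hh b⟩) (by
        rw [mulf_coe]
        exact le_satIdeal _ (Ideal.mem_sup_right
          (Ideal.mul_mem_right _ _ (Ideal.mem_span_singleton_self f))))
      rw [LinearMap.sum_apply, Finset.sum_eq_single b] at h1
      · rw [LinearMap.smul_apply, nu_apply, mulf_coe, map_mul, H1, mul_one, smul_eq_mul] at h1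
        exact (mul_eq_zero.1 h1).resolve_right (hEf b b.2)
      · intro a _ hab
        rw [LinearMap.smul_apply, nu_apply, mulf_coe, map_mul,
          H0 b a a.2 (fun h => hab (Subtype.ext h)), mul_zero, smul_zero]
      · intro hn; exact absurd (Finset.mem_univ b) hn
    simp [hc]
  · apply le_antisymm
    · rintro x ⟨hxA, hxB⟩
      obtain ⟨y, hy⟩ : ∃ y, y = ∑ b : E, (x (mulf hf e ⟨H b, Hh b⟩) / MvPolynomial.eval (b : Pm K m).rep f) •
        nu (t + e) (b : Pm K m).rep := ⟨_, rfl⟩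
      have hyE : y ∈ dualSpan (t + e) E := by
        rw [hy]
        exact Submodule.sum_mem _ fun b _ => Submodule.smul_mem _ _
          (Submodule.subset_span ⟨b, b.2, rfl⟩)
      have hyI : ∀ I : Ideal (PR K m), I ≤ idealOfSet E → y ∈ schemeSpanSub I (t + e) := by
        intro I hI
        rw [hy]
        exact Submodule.sum_mem _ fun b _ => Submodule.smul_mem _ _ (nu_mem_schemeSpan hI b.2)
      have hkey : ∀ h : Hd K m e, (x - y) (mulf hf e h) = 0 := by
        intro h
        obtain ⟨r, hr⟩ : ∃ r : Hd K m e, r = ∑ b : E, (MvPolynomial.eval (b : Pm K m).rep (h : PR K m)) •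
          (⟨H b, Hh b⟩ : Hd K m e) := ⟨_, rfl⟩
        have hrE : ((h - r : Hd K m e) : PR K m) ∈ idealOfSet E := by
          rw [mem_idealOfSet_homog (h - r).2]
          intro a ha
          rw [hr, Submodule.coe_sub, Submodule.coe_sum, map_sub, map_sum,
            Finset.sum_eq_single (⟨a, ha⟩ : E)]
          · rw [Submodule.coe_smul, MvPolynomial.smul_eval, H1 ⟨a, ha⟩, mul_one, sub_self]
          · intro b _ hb
            rw [Submodule.coe_smul, MvPolynomial.smul_eval, H0 b a ha (fun h => hb (Subtype.ext h.symm)), mul_zero]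
          · intro hn; exact absurd (Finset.mem_univ _) hn
        have h1 : x (mulf hf e (h - r)) = 0 := hxA _ (by rw [mulf_coe]; exact hfA _ hrE)
        rw [map_sub, map_sub, sub_eq_zero] at h1
        rw [LinearMap.sub_apply, h1, hr, hy, map_sum, map_sum, LinearMap.sum_apply, sub_eq_zero]
        refine Finset.sum_congr rfl fun b _ => ?_
        have := hEf b b.2
        rw [map_smul, map_smul, LinearMap.smul_apply, nu_apply, mulf_coe, map_mul, smul_eq_mul,
          smul_eq_mul]
        field_simp
      have hgen : ∀ I : Ideal (PR K m), IsHomogI I → IsSatI I → W ≤ I →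
          (∀ z ∈ Z, f * z ∈ I) → x - y ∈ schemeSpanSub I (t + e) →
          x - y ∈ schemeSpanSub (satIdeal (I ⊔ Ideal.span {f})) (t + e) := by
        intro I hIh hIs hWI hZI hxI
        rintro ⟨g, hg⟩ hgm
        rw [← Ideal.mul_top (Ideal.span {f})] at hgm
        obtain ⟨h, -, hh, hgA⟩ := lemmaM (U := ⊤) hIh (fun _ _ _ => Submodule.mem_top) hf hlh
          (hlJ _ hWI hIs) (fun _ _ => Submodule.mem_top) le_top hZI hsurj hg hgm
        have e1 : (⟨g, hg⟩ : Hd K m (t + e)) = ⟨g - f * h, hg.sub (hf.mul hh)⟩ +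
            mulf hf e ⟨h, hh⟩ := by
          ext1; simp [mulf_coe]
        rw [e1, map_add, hkey, add_zero]
        exact hxI _ hgA
      refine Submodule.mem_sup.2 ⟨y, hyE, x - y, ⟨?_, ?_⟩, by simp⟩
      · exact hgen A.I A.homog A.sat hWA (fun z hz => mem_resIdeal.1 (hZA hz))
          (Submodule.sub_mem _ hxA (hyI _ hAE))
      · exact hgen B.I B.homog B.sat hWB (fun z hz => mem_resIdeal.1 (hZB hz))
          (Submodule.sub_mem _ hxB (hyI _ hBE))
    · refine sup_le ?_ ?_
      · refine Submodule.span_le.2 ?_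
        rintro _ ⟨a, ha, rfl⟩
        exact ⟨nu_mem_schemeSpan hAE ha, nu_mem_schemeSpan hBE ha⟩
      · rintro x ⟨hxA, hxB⟩
        exact ⟨fun p hp => hxA p (le_satIdeal _ (Ideal.mem_sup_left hp)),
          fun p hp => hxB p (le_satIdeal _ (Ideal.mem_sup_left hp))⟩
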